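/- arXiv:2410.00870 — 2 statements merged into one kernel-verified Lean document; each statement's English description precedes it below -/
import Mathlib

section
/- Let a, b ∈ ℚ and suppose f(x) = x^12 + a·x^6 + b is irreducible over ℚ. Assume: b is not a square in ℚ; b·(a^2 − 4b) is not a square in ℚ; 3·(4b − a^2) is not a square in ℚ; either −3b is a square in ℚ or 3b·(4b − a^2) is a square in ℚ; b is not a cube in ℚ; and the cubic x^3 − 3·b·x + a·b has no rational root. Then the Galois group of f over ℚ has order 72. -/
open Polynomial
open IntermediateField Module

/-!
Let `α`, `β` be the roots of `X ^ 2 + a X + b` and `L = ℚ(α)`, a quadratic field in which `α` has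
norm `b` and trace `-a`; the splitting field `K` of `f` is generated over `L` by all sixth roots of
`α` and `β`. Fix one of each, `x` and `y`. Since `(x y) ^ 6 = b` and
`(x ^ 6 - y ^ 6) ^ 2 = a ^ 2 - 4 b`, the hypothesis on `-3 b` and `3 b (4 b - a ^ 2)` puts `√-3`,
hence all sixth roots of unity, into `L(x, y)`, so `K = L(x, y)` and `[K : L] ≤ 36`.

Conversely `K` contains sixth roots of both `α` and `b`, and these are independent modulo squares
and modulo cubes in `L`, so `4` and `9` divide `[K : L]`. Indeed `b` is not a square in
`L = ℚ(√(a ^ 2 - 4 b))`, nor a cube, as `[L : ℚ] = 2`; and taking norms to `ℚ` excludes every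
relation between `α` and `b` except `b α = t ^ 3`. There `N t ^ 3 = b ^ 3`, hence `N t = b`, and
the trace of `t ^ 3 - (Tr t) t ^ 2 + b t = 0` makes `Tr t` a rational root of `r ^ 3 - 3 b r + a b`.
Over a general base field, `N t = b` holds because `√-3` is not in it, so that cubing is injective.
-/

theorem separable_of_irreducible_of_natDegree_ne_zero {F : Type*} [Field F] {f : F[X]}
    (hf : Irreducible f) (hdeg : (f.natDegree : F) ≠ 0) : f.Separable := by
  obtain ⟨m, hm⟩ : ∃ m, f.natDegree = m + 1 := Nat.exists_eq_add_one.2 hf.natDegree_pos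
  rw [separable_iff_derivative_ne_zero hf]
  intro h0
  have hcoeff : f.coeff (m + 1) * (m + 1) = 0 := by
    rw [← coeff_derivative, h0, coeff_zero]
  rw [← hm, coeff_natDegree] at hcoeff
  refine mul_ne_zero (leadingCoeff_ne_zero.2 hf.ne_zero) hdeg ?_
  rwa [hm, Nat.cast_succ]

section QuadraticInPower

variable {F : Type*} [Field F] {a b : F} {n : ℕ}

theorem natDegree_X_pow_two_mul_add (hn : n ≠ 0) (a b : F) :
    (X ^ (2 * n) + C a * X ^ n + C b).natDegree = 2 * n := by
  rw [natDegree_add_C, natDegree_add_eq_left_of_natDegree_lt, natDegree_X_pow]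
  calc (C a * X ^ n).natDegree ≤ n := natDegree_C_mul_X_pow_le a n
    _ < (X ^ (2 * n) : F[X]).natDegree := by rw [natDegree_X_pow]; omega

theorem exists_pow_add_pow_eq_and_pow_mul_pow_eq (hn : n ≠ 0)
    (h : (X ^ (2 * n) + C a * X ^ n + C b).Splits) :
    ∃ x y : F, x ^ n + y ^ n = -a ∧ x ^ n * y ^ n = b := by
  have hdeg := natDegree_X_pow_two_mul_add hn a b
  have hne : X ^ (2 * n) + C a * X ^ n + C b ≠ 0 := ne_zero_of_natDegree_gt (n := 0) (by omega)
  obtain ⟨x, hx⟩ := h.exists_eval_eq_zero (degree_ne_of_natDegree_ne (n := 0) (by omega))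
  simp only [eval_add, eval_mul, eval_pow, eval_X, eval_C] at hx
  have hfac : X ^ (2 * n) + C a * X ^ n + C b = (X ^ n - C (x ^ n)) * (X ^ n - C (-a - x ^ n)) := by
    rw [show b = x ^ n * (-a - x ^ n) by linear_combination hx]
    simp only [C_neg, C_sub, C_mul]
    ring
  obtain ⟨y, hy⟩ := (h.of_dvd hne (hfac ▸ Dvd.intro_left _ rfl)).exists_eval_eq_zero
    (degree_ne_of_natDegree_ne (n := 0) (by rwa [natDegree_X_pow_sub_C]))
  simp only [eval_sub, eval_pow, eval_X, eval_C] at hy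
  exact ⟨x, y, by linear_combination hy, by linear_combination x ^ n * hy - hx⟩

theorem irreducible_quadratic_of_irreducible (hn : n ≠ 0)
    (h : Irreducible (X ^ (2 * n) + C a * X ^ n + C b)) : Irreducible (X ^ 2 + C a * X + C b) := by
  refine of_irreducible_expand hn ?_
  rwa [map_add, map_add, map_mul, map_pow, expand_X, expand_C, expand_C, ← pow_mul, mul_comm n]

end QuadraticInPower

section CubeRootsOfUnity

variable {F : Type*} [Field F]

theorem pow_three_injective_of_sq_ne_neg_three (h : ∀ t : F, t ^ 2 ≠ -3) :
    Function.Injective fun t : F => t ^ 3 := by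
  intro x y hxy
  obtain rfl | hy := eq_or_ne y 0
  · simpa using hxy
  by_contra hne
  have hquad : x ^ 2 + x * y + y ^ 2 = 0 :=
    (mul_eq_zero.1 (by linear_combination hxy : (x - y) * (x ^ 2 + x * y + y ^ 2) = 0)).resolve_left
      (sub_ne_zero.2 hne)
  refine h ((2 * x + y) / y) ?_
  rw [div_pow, div_eq_iff (pow_ne_zero 2 hy)]
  linear_combination 4 * hquad

theorem two_ne_zero_of_sq_ne_neg_three (h : ∀ t : F, t ^ 2 ≠ -3) : (2 : F) ≠ 0 := fun h2 =>
  h 1 (by linear_combination 2 * h2)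

theorem sq_ne_neg_three (h3 : (3 : F) ≠ 0) {b d : F} (hb : ∀ t : F, t ^ 2 ≠ b)
    (hbd : ∀ t : F, t ^ 2 ≠ b * d)
    (h : (∃ s : F, s ^ 2 = -3 * b) ∨ ∃ s : F, s ^ 2 = -3 * (b * d)) (t : F) : t ^ 2 ≠ -3 := by
  intro ht
  have hdiv (s c : F) (hs : s ^ 2 = -3 * c) : (s / t) ^ 2 = c := by
    rw [div_pow, hs, ht, mul_div_cancel_left₀ c (neg_ne_zero.2 h3)]
  obtain ⟨s, hs⟩ | ⟨s, hs⟩ := h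
  · exact hb _ (hdiv s b hs)
  · exact hbd _ (hdiv s (b * d) hs)

theorem exists_sq_eq_neg_three {K : Type*} [Field K] [Algebra F K] {b d : F} {u v : K}
    (hu : u ^ 2 = algebraMap F K b) (hv : v ^ 2 = algebraMap F K d) (hb : b ≠ 0) (hd : d ≠ 0)
    (h : (∃ s : F, s ^ 2 = -3 * b) ∨ ∃ s : F, s ^ 2 = -3 * (b * d)) : ∃ w : K, w ^ 2 = -3 := by
  have hdiv (z : K) (c s : F) (hz : z ^ 2 = algebraMap F K c) (hc : c ≠ 0)
      (hs : s ^ 2 = -3 * c) : (algebraMap F K s / z) ^ 2 = -3 := by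
    rw [div_pow, ← map_pow, hs, hz, map_mul, mul_div_cancel_right₀ _ (by simpa using hc),
      map_neg, map_ofNat]
  obtain ⟨s, hs⟩ | ⟨s, hs⟩ := h
  · exact ⟨_, hdiv u b s hu hb hs⟩
  · exact ⟨_, hdiv (u * v) (b * d) s (by rw [mul_pow, hu, hv, map_mul]) (mul_ne_zero hb hd) hs⟩

theorem isPrimitiveRoot_six_of_sq_eq_neg_three (h2 : (2 : F) ≠ 0) (h3 : (3 : F) ≠ 0) {w : F}
    (hw : w ^ 2 = -3) : IsPrimitiveRoot ((1 + w) / 2) 6 := by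
  set ζ := (1 + w) / 2 with hζ
  have hquad : ζ ^ 2 = ζ - 1 := by
    rw [hζ]
    field_simp
    linear_combination hw
  have hcube : ζ ^ 3 = -1 := by linear_combination (ζ + 1) * hquad
  refine IsPrimitiveRoot.mk_of_lt ζ (by norm_num) (by linear_combination (ζ ^ 3 - 1) * hcube) ?_
  intro l hl hl6 hone
  interval_cases l
  · exact one_ne_zero (by linear_combination hquad - ζ * hone : (1 : F) = 0)
  · exact h3 (by linear_combination hone - (ζ + 2) * (hone - hquad))
  · exact h2 (by linear_combination hcube - hone)
  · exact h3 (by linear_combination hquad - (ζ - 2) * (ζ * hcube - hone))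
  · exact one_ne_zero
      (by linear_combination hquad - ζ * ((ζ ^ 3 - 1) * hcube - ζ * hone) : (1 : F) = 0)

end CubeRootsOfUnity

section PrimeRadical

variable {F K : Type*} [Field F] [Field K] [Algebra F K] {p : ℕ} {x : K} {c : F}

theorem isIntegral_of_pow_eq_algebraMap {n : ℕ} (hn : n ≠ 0) (hx : x ^ n = algebraMap F K c) :
    IsIntegral F x :=
  ⟨X ^ n - C c, monic_X_pow_sub_C c hn, by simp [hx]⟩

theorem finrank_adjoin_simple_le_of_pow_eq {n : ℕ} (hn : n ≠ 0) (hx : x ^ n = algebraMap F K c) :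
    finrank F F⟮x⟯ ≤ n := by
  rw [adjoin.finrank (isIntegral_of_pow_eq_algebraMap hn hx)]
  calc (minpoly F x).natDegree ≤ (X ^ n - C c).natDegree :=
        natDegree_le_natDegree (minpoly.min F x (monic_X_pow_sub_C c hn) (by simp [hx]))
    _ = n := natDegree_X_pow_sub_C

theorem minpoly_eq_X_pow_sub_C (hp : p.Prime) (hx : x ^ p = algebraMap F K c)
    (hc : ∀ t : F, t ^ p ≠ c) : minpoly F x = X ^ p - C c :=
  (minpoly.eq_of_irreducible_of_monic (X_pow_sub_C_irreducible_of_prime hp hc) (by simp [hx])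
    (monic_X_pow_sub_C c hp.ne_zero)).symm

theorem finrank_adjoin_simple_eq_of_pow_eq (hp : p.Prime) (hx : x ^ p = algebraMap F K c)
    (hc : ∀ t : F, t ^ p ≠ c) : finrank F F⟮x⟯ = p := by
  rw [adjoin.finrank (isIntegral_of_pow_eq_algebraMap hp.ne_zero hx),
    minpoly_eq_X_pow_sub_C hp hx hc, natDegree_X_pow_sub_C]

theorem pow_ne_algebraMap_of_not_dvd_finrank (hp : p.Prime) (hK : ¬ p ∣ finrank F K)
    (hc : ∀ t : F, t ^ p ≠ c) (z : K) : z ^ p ≠ algebraMap F K c := fun hz =>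
  hK (finrank_adjoin_simple_eq_of_pow_eq hp hz hc ▸ finrank_dvd_finrank_right F F⟮z⟯ K)

theorem trace_eq_zero_of_pow_eq [FiniteDimensional F K] (hp : p.Prime)
    (hx : x ^ p = algebraMap F K c) (hc : ∀ t : F, t ^ p ≠ c) : Algebra.trace F K x = 0 := by
  have hnext : (X ^ p - C c : F[X]).nextCoeff = 0 := by
    rw [nextCoeff_of_natDegree_pos (by simpa using hp.pos), natDegree_X_pow_sub_C, coeff_sub,
      coeff_X_pow, coeff_C, if_neg (by have := hp.pos; omega),
      if_neg (by have := hp.two_le; omega), sub_zero]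
  rw [trace_eq_finrank_mul_minpoly_nextCoeff, minpoly_eq_X_pow_sub_C hp hx hc, hnext, neg_zero,
    mul_zero]

theorem exists_trace_gen_pow_mul_ne_zero (pb : PowerBasis F K) (hK : (finrank F K : F) ≠ 0)
    {z : K} (hz : z ≠ 0) : ∃ k : Fin pb.dim, Algebra.trace F K (pb.gen ^ (k : ℕ) * z) ≠ 0 := by
  by_contra! h
  have hzero : Algebra.trace F K ∘ₗ LinearMap.mulRight F z = 0 :=
    pb.basis.ext fun k => by simpa using h k
  apply hK
  calc (finrank F K : F) = Algebra.trace F K (z⁻¹ * z) := by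
        rw [inv_mul_cancel₀ hz, ← map_one (algebraMap F K), Algebra.trace_algebraMap, nsmul_one]
    _ = 0 := LinearMap.congr_fun hzero z⁻¹

-- An element whose `p`-th power is not a `p`-th power in `F` has trace zero, but the nonzero map
-- `Tr (· * z⁻¹)` cannot kill the whole basis `1, x, ..., x ^ (p - 1)`.
theorem exists_pow_mul_pow_eq_of_finrank_eq (hp : p.Prime) (hpF : (p : F) ≠ 0)
    (hK : finrank F K = p) (hx : x ^ p = algebraMap F K c) (hc : ∀ t : F, t ^ p ≠ c) {z : K}
    {e : F} (hz : z ^ p = algebraMap F K e) : ∃ k < p, ∃ t : F, t ^ p * c ^ k = e := by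
  obtain rfl | he := eq_or_ne e 0
  · exact ⟨0, hp.pos, 0, by simp [hp.ne_zero]⟩
  have hc0 : c ≠ 0 := fun h => hc 0 (by rw [h, zero_pow hp.ne_zero])
  have hz0 : z ≠ 0 := by
    rintro rfl
    rw [zero_pow hp.ne_zero] at hz
    exact he ((map_eq_zero _).1 hz.symm)
  have : FiniteDimensional F K := .of_finrank_pos (hK ▸ hp.pos)
  have htop : F⟮x⟯ = ⊤ :=
    eq_of_le_of_finrank_eq le_top (by
      rw [finrank_adjoin_simple_eq_of_pow_eq hp hx hc, finrank_top', hK])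
  obtain ⟨pb, hgen⟩ : ∃ pb : PowerBasis F K, pb.gen = x :=
    ⟨.ofAdjoinEqTop (.of_finite F x)
      (Algebra.adjoin_eq_top_of_primitive_element (.of_finite F x) htop),
      PowerBasis.ofAdjoinEqTop_gen _ _⟩
  obtain ⟨k, hk⟩ := exists_trace_gen_pow_mul_ne_zero pb (hK.symm ▸ hpF) (inv_ne_zero hz0)
  have hw : (pb.gen ^ (k : ℕ) * z⁻¹) ^ p = algebraMap F K (c ^ (k : ℕ) / e) := by
    rw [hgen, mul_pow, pow_right_comm, hx, inv_pow, hz, map_div₀, map_pow, div_eq_mul_inv]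
  obtain ⟨t, ht⟩ : ∃ t : F, t ^ p = c ^ (k : ℕ) / e := by
    by_contra! h
    exact hk (trace_eq_zero_of_pow_eq hp hw h)
  refine ⟨k, k.2.trans_eq (pb.finrank.symm.trans hK), t⁻¹, ?_⟩
  rw [inv_pow, ht, inv_div, div_mul_cancel₀ _ (pow_ne_zero _ hc0)]

theorem sq_dvd_finrank_of_pow_eq (hp : p.Prime) (hpF : (p : F) ≠ 0) {y : K} {e : F}
    (hx : x ^ p = algebraMap F K c) (hy : y ^ p = algebraMap F K e) (hc : ∀ t : F, t ^ p ≠ c)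
    (he : ∀ k < p, ∀ t : F, t ^ p * c ^ k ≠ e) : p ^ 2 ∣ finrank F K := by
  have hy' : y ^ p = algebraMap F⟮x⟯ K (algebraMap F F⟮x⟯ e) := by
    rw [hy, ← IsScalarTower.algebraMap_apply]
  have hdim : finrank F⟮x⟯ F⟮x⟯⟮y⟯ = p := by
    refine finrank_adjoin_simple_eq_of_pow_eq hp hy' fun z hz => ?_
    obtain ⟨g, hg⟩ : ∃ g : F⟮x⟯, g ^ p = algebraMap F F⟮x⟯ c :=
      ⟨AdjoinSimple.gen F x, Subtype.ext hx⟩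
    obtain ⟨k, hk, t, ht⟩ := exists_pow_mul_pow_eq_of_finrank_eq (K := F⟮x⟯) hp hpF
      (finrank_adjoin_simple_eq_of_pow_eq hp hx hc) hg hc hz
    exact he k hk t ht
  rw [← finrank_mul_finrank F F⟮x⟯ K, finrank_adjoin_simple_eq_of_pow_eq hp hx hc, sq]
  exact mul_dvd_mul_left p (hdim ▸ finrank_dvd_finrank_right F⟮x⟯ F⟮x⟯⟮y⟯ K)

end PrimeRadical

section QuadraticExtension

variable {F L : Type*} [Field F] [Field L] [Algebra F L] [Algebra.IsQuadraticExtension F L]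

open Algebra

theorem sq_eq_trace_mul_sub_norm (t : L) :
    t ^ 2 = algebraMap F L (trace F L t) * t - algebraMap F L (norm F t) := by
  let B := finBasisOfFinrankEq F L (IsQuadraticExtension.finrank_eq_two F L)
  apply leftMulMatrix_injective B
  rw [trace_eq_matrix_trace B, norm_eq_matrix_det B]
  simp only [map_pow, map_sub, map_mul, AlgHom.commutes]
  ext i j
  fin_cases i <;> fin_cases j <;>
    simp [sq, Matrix.mul_apply, Fin.sum_univ_two, Matrix.trace_fin_two, Matrix.det_fin_two,
      Matrix.algebraMap_matrix_apply] <;> ring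

theorem trace_pow_three (t : L) :
    trace F L (t ^ 3) = trace F L t ^ 3 - 3 * norm F t * trace F L t := by
  have hsq : t ^ 2 = trace F L t • t - norm F t • (1 : L) := by
    simpa only [Algebra.smul_def, mul_one] using sq_eq_trace_mul_sub_norm (F := F) t
  have hcube : t ^ 3 = trace F L t • t ^ 2 - norm F t • t := by
    rw [Algebra.smul_def, Algebra.smul_def]
    linear_combination t * sq_eq_trace_mul_sub_norm (F := F) t
  have hone : trace F L 1 = 2 := by
    rw [← map_one (algebraMap F L), trace_algebraMap, IsQuadraticExtension.finrank_eq_two]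
    simp
  have htr_sq : trace F L (t ^ 2) = trace F L t ^ 2 - 2 * norm F t := by
    rw [hsq, map_sub, map_smul, map_smul, hone, smul_eq_mul, smul_eq_mul]
    ring
  rw [hcube, map_sub, map_smul, map_smul, htr_sq, smul_eq_mul, smul_eq_mul]
  ring

theorem sq_ne_algebraMap_of_sq_eq (h2 : (2 : F) ≠ 0) {c d : F} {s : L}
    (hs : s ^ 2 = algebraMap F L d) (hd : ∀ t : F, t ^ 2 ≠ d) (hc : ∀ t : F, t ^ 2 ≠ c)
    (hcd : ∀ t : F, t ^ 2 ≠ c * d) (t : L) : t ^ 2 ≠ algebraMap F L c := by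
  intro ht
  obtain ⟨k, hk, r, hr⟩ := exists_pow_mul_pow_eq_of_finrank_eq Nat.prime_two (mod_cast h2)
    (IsQuadraticExtension.finrank_eq_two F L) hs hd ht
  interval_cases k
  · exact hc r (by linear_combination hr)
  · exact hcd (r * d) (by linear_combination d * hr)

theorem sq_mul_pow_ne_of_norm {c : F} (hc : ∀ t : F, t ^ 2 ≠ c) {α : L} (hα : norm F α = c)
    (t : L) (k : ℕ) : t ^ 2 * algebraMap F L c ^ k ≠ α := by
  rintro rfl
  rw [map_mul, map_pow, map_pow, Algebra.norm_algebraMap, IsQuadraticExtension.finrank_eq_two] at hα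
  exact hc (norm F t * c ^ k) (by linear_combination hα)

theorem cube_mul_pow_ne_of_norm {c : F} (hc : ∀ t : F, t ^ 3 ≠ c) {α : L} (hα : norm F α = c)
    (hcα : ∀ t : L, t ^ 3 ≠ algebraMap F L c * α) (t : L) {k : ℕ} (hk : k < 3) :
    t ^ 3 * algebraMap F L c ^ k ≠ α := by
  intro ht
  have hnorm : norm F t ^ 3 * (c ^ 2) ^ k = c := by
    have := congrArg (norm F) ht
    rwa [map_mul, map_pow, map_pow, Algebra.norm_algebraMap, IsQuadraticExtension.finrank_eq_two,
      hα] at this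
  have hc0 : c ≠ 0 := fun h => hc 0 (by simp [h])
  interval_cases k
  · exact hc (norm F t) (by linear_combination hnorm)
  · refine hc (norm F t)⁻¹ ?_
    rw [inv_pow]
    exact inv_eq_of_mul_eq_one_right (mul_right_cancel₀ hc0 (by linear_combination hnorm))
  · exact hcα (t * algebraMap F L c) (by linear_combination algebraMap F L c * ht)

theorem cube_ne_algebraMap_mul_of_norm (hinj : Function.Injective fun t : F => t ^ 3) {a b : F}
    {α : L} (htr : trace F L α = -a) (hα : norm F α = b)
    (hroot : ∀ r : F, r ^ 3 - 3 * b * r + a * b ≠ 0) (t : L) : t ^ 3 ≠ algebraMap F L b * α := by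
  intro ht
  have hnorm : norm F t = b := by
    apply hinj
    simp only
    rw [← map_pow, ht, map_mul, Algebra.norm_algebraMap, IsQuadraticExtension.finrank_eq_two, hα]
    ring
  have htrace : trace F L (t ^ 3) = b * -a := by
    rw [ht, ← Algebra.smul_def, map_smul, smul_eq_mul, htr]
  rw [trace_pow_three, hnorm] at htrace
  exact hroot (trace F L t) (by linear_combination htrace)

end QuadraticExtension

section QuadraticSubfield

variable {F K : Type*} [Field F] [Field K] [Algebra F K] {a b : F} {u v : K}

theorem minpoly_eq_of_add_eq_of_mul_eq (hq : Irreducible (X ^ 2 + C a * X + C b))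
    (hadd : u + v = algebraMap F K (-a)) (hmul : u * v = algebraMap F K b) :
    minpoly F u = X ^ 2 + C a * X + C b := by
  refine (minpoly.eq_of_irreducible_of_monic hq ?_ (by monicity!)).symm
  rw [map_neg] at hadd
  simp only [map_add, map_mul, map_pow, aeval_X, aeval_C]
  linear_combination u * hadd - hmul

theorem isIntegral_of_minpoly_eq (hu : minpoly F u = X ^ 2 + C a * X + C b) : IsIntegral F u :=
  minpoly.ne_zero_iff.1 (hu ▸ Monic.ne_zero (by monicity!))

theorem isQuadraticExtension_adjoin_simple (hu : minpoly F u = X ^ 2 + C a * X + C b) :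
    Algebra.IsQuadraticExtension F F⟮u⟯ where
  finrank_eq_two' := by
    rw [adjoin.finrank (isIntegral_of_minpoly_eq hu), hu]
    compute_degree!

theorem trace_gen_of_minpoly_eq (hu : minpoly F u = X ^ 2 + C a * X + C b) :
    Algebra.trace F F⟮u⟯ (AdjoinSimple.gen F u) = -a := by
  have hnext : (X ^ 2 + C a * X + C b).nextCoeff = a := by
    have hdeg : (X ^ 2 + C a * X + C b).natDegree = 2 := by compute_degree!
    rw [nextCoeff_of_natDegree_pos (by omega), hdeg]
    simp [coeff_C]
  rw [trace_adjoinSimpleGen (isIntegral_of_minpoly_eq hu), hu, hnext]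

theorem norm_gen_of_minpoly_eq (hu : minpoly F u = X ^ 2 + C a * X + C b) :
    Algebra.norm F (AdjoinSimple.gen F u) = b := by
  have hint := isIntegral_of_minpoly_eq hu
  have hdeg : (X ^ 2 + C a * X + C b).natDegree = 2 := by compute_degree!
  have hnorm := Algebra.PowerBasis.norm_gen_eq_coeff_zero_minpoly (adjoin.powerBasis hint)
  rw [adjoin.powerBasis_gen, minpoly_gen, adjoin.powerBasis_dim, hu, hdeg] at hnorm
  simpa using hnorm

theorem sq_ne_discrim_of_irreducible (h2 : (2 : F) ≠ 0)
    (hq : Irreducible (X ^ 2 + C a * X + C b)) (t : F) : t ^ 2 ≠ a ^ 2 - 4 * b := by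
  intro ht
  have hdeg : (X ^ 2 + C a * X + C b).natDegree = 2 := by compute_degree!
  refine hq.not_isRoot_of_natDegree_ne_one (by rw [hdeg]; norm_num) (x := (t - a) / 2) ?_
  simp only [IsRoot, eval_add, eval_mul, eval_pow, eval_X, eval_C]
  field_simp
  linear_combination ht

end QuadraticSubfield

section Divisibility

variable {F L K : Type*} [Field F] [Field L] [Field K] [Algebra F L] [Algebra L K]
  [Algebra.IsQuadraticExtension F L] {a b : F} {α : L} {x y : K}

theorem four_dvd_finrank_of_sq_eq (h2 : (2 : F) ≠ 0) (htr : Algebra.trace F L α = -a)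
    (hnorm : Algebra.norm F α = b) (hd : ∀ t : F, t ^ 2 ≠ a ^ 2 - 4 * b)
    (hb : ∀ t : F, t ^ 2 ≠ b) (hbd : ∀ t : F, t ^ 2 ≠ b * (a ^ 2 - 4 * b))
    (hx : x ^ 2 = algebraMap L K α) (hy : y ^ 2 = algebraMap L K (algebraMap F L b)) :
    2 ^ 2 ∣ finrank L K := by
  have hdisc : (2 * α + algebraMap F L a) ^ 2 = algebraMap F L (a ^ 2 - 4 * b) := by
    have hα := sq_eq_trace_mul_sub_norm (F := F) α
    rw [htr, hnorm, map_neg] at hα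
    simp only [map_sub, map_mul, map_pow, map_ofNat]
    linear_combination 4 * hα
  have h2L : ((2 : ℕ) : L) ≠ 0 := by
    simpa only [map_ofNat, Nat.cast_ofNat] using (map_ne_zero (algebraMap F L)).2 h2
  exact sq_dvd_finrank_of_pow_eq Nat.prime_two h2L hy hx
    (sq_ne_algebraMap_of_sq_eq h2 hdisc hd hb hbd)
    fun k _ t => sq_mul_pow_ne_of_norm hb hnorm t k

theorem nine_dvd_finrank_of_pow_three_eq (h3 : (3 : F) ≠ 0)
    (hinj : Function.Injective fun t : F => t ^ 3) (htr : Algebra.trace F L α = -a)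
    (hnorm : Algebra.norm F α = b) (hb : ∀ t : F, t ^ 3 ≠ b)
    (hroot : ∀ r : F, r ^ 3 - 3 * b * r + a * b ≠ 0)
    (hx : x ^ 3 = algebraMap L K α) (hy : y ^ 3 = algebraMap L K (algebraMap F L b)) :
    3 ^ 2 ∣ finrank L K := by
  have h3L : ((3 : ℕ) : L) ≠ 0 := by
    simpa only [map_ofNat, Nat.cast_ofNat] using (map_ne_zero (algebraMap F L)).2 h3
  have hL : ¬ 3 ∣ finrank F L := by
    rw [Algebra.IsQuadraticExtension.finrank_eq_two]
    norm_num
  exact sq_dvd_finrank_of_pow_eq Nat.prime_three h3L hy hx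
    (pow_ne_algebraMap_of_not_dvd_finrank Nat.prime_three hL hb)
    fun k hk t => cube_mul_pow_ne_of_norm hb hnorm
      (cube_ne_algebraMap_mul_of_norm hinj htr hnorm hroot) t hk

theorem thirtysix_dvd_finrank_of_pow_six_eq (h3 : (3 : F) ≠ 0) (hω : ∀ t : F, t ^ 2 ≠ -3)
    (htr : Algebra.trace F L α = -a) (hnorm : Algebra.norm F α = b)
    (hd : ∀ t : F, t ^ 2 ≠ a ^ 2 - 4 * b) (hb : ∀ t : F, t ^ 2 ≠ b)
    (hbd : ∀ t : F, t ^ 2 ≠ b * (a ^ 2 - 4 * b)) (hb3 : ∀ t : F, t ^ 3 ≠ b)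
    (hroot : ∀ r : F, r ^ 3 - 3 * b * r + a * b ≠ 0)
    (hx : x ^ 6 = algebraMap L K α) (hy : y ^ 6 = algebraMap L K (algebraMap F L b)) :
    36 ∣ finrank L K :=
  Nat.Coprime.mul_dvd_of_dvd_of_dvd (by norm_num : Nat.Coprime (2 ^ 2) (3 ^ 2))
    (four_dvd_finrank_of_sq_eq (x := x ^ 3) (y := y ^ 3) (two_ne_zero_of_sq_ne_neg_three hω)
      htr hnorm hd hb hbd (by rw [← pow_mul, hx]) (by rw [← pow_mul, hy]))
    (nine_dvd_finrank_of_pow_three_eq (x := x ^ 2) (y := y ^ 2) h3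
      (pow_three_injective_of_sq_ne_neg_three hω) htr hnorm hb3 hroot (by rw [← pow_mul, hx])
      (by rw [← pow_mul, hy]))

end Divisibility

theorem finrank_le_mul_self_of_adjoin_eq_top {F K : Type*} [Field F] [Field K] [Algebra F K]
    {n : ℕ} [NeZero n] {x y ζ : K} {α β : F} (hx : x ^ n = algebraMap F K α)
    (hy : y ^ n = algebraMap F K β) (hζ : IsPrimitiveRoot ζ n) (hζmem : ζ ∈ F⟮x⟯ ⊔ F⟮y⟯)
    (htop : adjoin F {r : K | r ^ n = x ^ n ∨ r ^ n = y ^ n} = ⊤) : finrank F K ≤ n * n := by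
  have hroot {r z : K} (hz : z ∈ F⟮x⟯ ⊔ F⟮y⟯) (h : r ^ n = z ^ n) : r ∈ F⟮x⟯ ⊔ F⟮y⟯ := by
    obtain rfl | hz0 := eq_or_ne z 0
    · rw [zero_pow (NeZero.ne n)] at h
      rw [pow_eq_zero_iff (NeZero.ne n) |>.1 h]
      exact zero_mem _
    · obtain ⟨i, -, hi⟩ := hζ.eq_pow_of_pow_eq_one
        (by rw [div_pow, h, div_self (pow_ne_zero n hz0)] : (r / z) ^ n = 1)
      rw [← div_mul_cancel₀ r hz0, ← hi]
      exact mul_mem (pow_mem hζmem i) hz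
  have hsup : F⟮x⟯ ⊔ F⟮y⟯ = ⊤ := by
    rw [eq_top_iff, ← htop, adjoin_le_iff]
    rintro r (hr | hr)
    · exact hroot (le_sup_left (a := F⟮x⟯) (mem_adjoin_simple_self F x)) hr
    · exact hroot (le_sup_right (b := F⟮y⟯) (mem_adjoin_simple_self F y)) hr
  calc finrank F K = finrank F ↥(F⟮x⟯ ⊔ F⟮y⟯) := by rw [hsup, finrank_top']
    _ ≤ finrank F F⟮x⟯ * finrank F F⟮y⟯ := finrank_sup_le F⟮x⟯ F⟮y⟯
    _ ≤ n * n := Nat.mul_le_mul (finrank_adjoin_simple_le_of_pow_eq (NeZero.ne n) hx)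
        (finrank_adjoin_simple_le_of_pow_eq (NeZero.ne n) hy)

theorem exists_pow_add_pow_eq_algebraMap {F : Type*} [Field F] {n : ℕ} {a b : F} (hn : n ≠ 0)
    (K : Type*) [Field K] [Algebra F K]
    [IsSplittingField F K (X ^ (2 * n) + C a * X ^ n + C b)] :
    ∃ x y : K, x ^ n + y ^ n = algebraMap F K (-a) ∧ x ^ n * y ^ n = algebraMap F K b := by
  have hsplits := IsSplittingField.splits K (X ^ (2 * n) + C a * X ^ n + C b)
  rw [Polynomial.map_add, Polynomial.map_add, Polynomial.map_mul, Polynomial.map_pow,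
    Polynomial.map_pow, map_X, map_C, map_C] at hsplits
  rw [map_neg]
  exact exists_pow_add_pow_eq_and_pow_mul_pow_eq hn hsplits

section SplittingField

variable {F E K : Type*} [Field F] [Field E] [Field K] [Algebra F E] [Algebra E K] [Algebra F K]
  [IsScalarTower F E K] {n : ℕ} {a b : F} {x y : K}

theorem adjoin_setOf_pow_eq_eq_top [IsSplittingField F K (X ^ (2 * n) + C a * X ^ n + C b)]
    (hadd : x ^ n + y ^ n = algebraMap F K (-a)) (hmul : x ^ n * y ^ n = algebraMap F K b) :
    adjoin E {r : K | r ^ n = x ^ n ∨ r ^ n = y ^ n} = ⊤ := by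
  refine adjoin_eq_top_of_adjoin_eq_top F (adjoin_eq_top_of_algebra F _ (top_unique ?_))
  rw [← IsSplittingField.adjoin_rootSet K (X ^ (2 * n) + C a * X ^ n + C b)]
  refine Algebra.adjoin_mono fun r hr => ?_
  have hroot := aeval_eq_zero_of_mem_rootSet hr
  simp only [map_add, map_mul, map_pow, aeval_X, aeval_C] at hroot
  rw [map_neg] at hadd
  have hfac : (r ^ n - x ^ n) * (r ^ n - y ^ n) = 0 := by
    linear_combination hroot + hmul - r ^ n * hadd
  simpa only [mul_eq_zero, sub_eq_zero, Set.mem_ofPred_eq] using hfac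

theorem finrank_le_thirtysix [IsSplittingField F K (X ^ (2 * 6) + C a * X ^ 6 + C b)]
    (h2 : (2 : F) ≠ 0) (h3 : (3 : F) ≠ 0) (hb : b ≠ 0) (hd : a ^ 2 - 4 * b ≠ 0)
    (h : (∃ s : F, s ^ 2 = -3 * b) ∨ ∃ s : F, s ^ 2 = -3 * (b * (a ^ 2 - 4 * b)))
    (hadd : x ^ 6 + y ^ 6 = algebraMap F K (-a)) (hmul : x ^ 6 * y ^ 6 = algebraMap F K b)
    {α : E} (hx : x ^ 6 = algebraMap E K α) : finrank E K ≤ 36 := by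
  have hy : y ^ 6 = algebraMap E K (algebraMap F E (-a) - α) := by
    rw [map_sub, ← IsScalarTower.algebraMap_apply]
    linear_combination hadd - hx
  let M := (E⟮x⟯ ⊔ E⟮y⟯).restrictScalars F
  let u : M := ⟨x, le_sup_left (a := E⟮x⟯) (mem_adjoin_simple_self E x)⟩
  let v : M := ⟨y, le_sup_right (b := E⟮y⟯) (mem_adjoin_simple_self E y)⟩
  have haddM : u ^ 6 + v ^ 6 = algebraMap F M (-a) := Subtype.ext hadd
  have hmulM : u ^ 6 * v ^ 6 = algebraMap F M b := Subtype.ext hmul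
  have hdisc : (u ^ 6 - v ^ 6) ^ 2 = algebraMap F M (a ^ 2 - 4 * b) := by
    rw [map_neg] at haddM
    simp only [map_sub, map_mul, map_pow, map_ofNat]
    linear_combination (u ^ 6 + v ^ 6 - algebraMap F M a) * haddM - 4 * hmulM
  obtain ⟨w, hw⟩ := exists_sq_eq_neg_three (u := u ^ 3 * v ^ 3)
    (by rw [← hmulM]; ring) hdisc hb hd h
  have h2M : (2 : M) ≠ 0 := by simpa only [map_ofNat] using (map_ne_zero (algebraMap F M)).2 h2
  have h3M : (3 : M) ≠ 0 := by simpa only [map_ofNat] using (map_ne_zero (algebraMap F M)).2 h3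
  have hζ := isPrimitiveRoot_six_of_sq_eq_neg_three h2M h3M hw
  exact finrank_le_mul_self_of_adjoin_eq_top hx hy (hζ.map_of_injective M.val.injective)
    ((1 + w) / 2 : M).2 (adjoin_setOf_pow_eq_eq_top hadd hmul)

end SplittingField

theorem finrank_eq_seventytwo {F K : Type*} [Field F] [Field K] [Algebra F K] {a b : F}
    [IsSplittingField F K (X ^ (2 * 6) + C a * X ^ 6 + C b)] (h3 : (3 : F) ≠ 0)
    (hirr : Irreducible (X ^ (2 * 6) + C a * X ^ 6 + C b)) (hb : ∀ t : F, t ^ 2 ≠ b)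
    (hbd : ∀ t : F, t ^ 2 ≠ b * (a ^ 2 - 4 * b))
    (h3b : (∃ s : F, s ^ 2 = -3 * b) ∨ ∃ s : F, s ^ 2 = -3 * (b * (a ^ 2 - 4 * b)))
    (hb3 : ∀ t : F, t ^ 3 ≠ b) (hroot : ∀ r : F, r ^ 3 - 3 * b * r + a * b ≠ 0) :
    finrank F K = 72 := by
  have hω := sq_ne_neg_three h3 hb hbd h3b
  have h2 := two_ne_zero_of_sq_ne_neg_three hω
  have hq := irreducible_quadratic_of_irreducible (by norm_num) hirr
  have hd := sq_ne_discrim_of_irreducible h2 hq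
  have hb0 : b ≠ 0 := fun h => hb 0 (by rw [h, zero_pow two_ne_zero])
  have hd0 : a ^ 2 - 4 * b ≠ 0 := fun h => hd 0 (by rw [h, zero_pow two_ne_zero])
  obtain ⟨x, y, hadd, hmul⟩ := exists_pow_add_pow_eq_algebraMap (a := a) (b := b)
    (by norm_num : 6 ≠ 0) K
  have hmin := minpoly_eq_of_add_eq_of_mul_eq hq hadd hmul
  have := isQuadraticExtension_adjoin_simple hmin
  have hx : x ^ 6 = algebraMap F⟮x ^ 6⟯ K (AdjoinSimple.gen F (x ^ 6)) := rfl
  have hxy : (x * y) ^ 6 = algebraMap F⟮x ^ 6⟯ K (algebraMap F F⟮x ^ 6⟯ b) := by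
    rw [mul_pow, hmul, ← IsScalarTower.algebraMap_apply]
  have hdvd := thirtysix_dvd_finrank_of_pow_six_eq h3 hω (trace_gen_of_minpoly_eq hmin)
    (norm_gen_of_minpoly_eq hmin) hd hb hbd hb3 hroot hx hxy
  have hle := finrank_le_thirtysix h2 h3 hb0 hd0 h3b hadd hmul hx
  have : FiniteDimensional F K :=
    IsSplittingField.finiteDimensional K (X ^ (2 * 6) + C a * X ^ 6 + C b)
  rw [← finrank_mul_finrank F F⟮x ^ 6⟯ K, Algebra.IsQuadraticExtension.finrank_eq_two,
    hle.antisymm (Nat.le_of_dvd finrank_pos hdvd)]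

theorem gal_order_seventytwo_of_12T38_general {F : Type*} [Field F] (h3 : (3 : F) ≠ 0)
    (a b : F) (f : F[X]) (hf : f = X ^ 12 + C a * X ^ 6 + C b)
    (hirr : Irreducible f) (hb_nsq : ¬ ∃ s : F, s ^ 2 = b)
    (hbd : ¬ ∃ s : F, s ^ 2 = b * (a ^ 2 - 4 * b))
    (h3b : (∃ s : F, s ^ 2 = -3 * b) ∨ ∃ s : F, s ^ 2 = 3 * b * (4 * b - a ^ 2))
    (hnc : ¬ ∃ c : F, c ^ 3 = b)
    (hnr : ¬ ∃ r : F, r ^ 3 - 3 * b * r + a * b = 0) :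
    Nat.card f.Gal = 72 := by
  have h3b' : (∃ s : F, s ^ 2 = -3 * b) ∨ ∃ s : F, s ^ 2 = -3 * (b * (a ^ 2 - 4 * b)) := by
    rwa [show -3 * (b * (a ^ 2 - 4 * b)) = 3 * b * (4 * b - a ^ 2) by ring]
  have h2 : (2 : F) ≠ 0 := two_ne_zero_of_sq_ne_neg_three
    (sq_ne_neg_three h3 (not_exists.1 hb_nsq) (not_exists.1 hbd) h3b')
  replace hf : f = X ^ (2 * 6) + C a * X ^ 6 + C b := hf
  have hdeg : (f.natDegree : F) ≠ 0 := by
    rw [hf, natDegree_X_pow_two_mul_add (by norm_num), show 2 * 6 = 2 * 2 * 3 from rfl]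
    exact_mod_cast mul_ne_zero (mul_ne_zero h2 h2) h3
  rw [Gal.card_of_separable (separable_of_irreducible_of_natDegree_ne_zero hirr hdeg)]
  subst hf
  exact finrank_eq_seventytwo h3 hirr (not_exists.1 hb_nsq) (not_exists.1 hbd) h3b'
    (not_exists.1 hnc) (not_exists.1 hnr)

theorem gal_order_seventytwo_of_12T38 (a b : ℚ) (f : ℚ[X])
    (hf : f = X ^ 12 + C a * X ^ 6 + C b) (hirr : Irreducible f)
    (hb_nsq : ¬ ∃ s : ℚ, s ^ 2 = b)
    (hbd : ¬ ∃ s : ℚ, s ^ 2 = b * (a ^ 2 - 4 * b))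
    (hd : ¬ ∃ s : ℚ, s ^ 2 = 3 * (4 * b - a ^ 2))
    (h3b : (∃ s : ℚ, s ^ 2 = -3 * b) ∨ ∃ s : ℚ, s ^ 2 = 3 * b * (4 * b - a ^ 2))
    (hnc : ¬ ∃ c : ℚ, c ^ 3 = b)
    (hnr : ¬ ∃ r : ℚ, r ^ 3 - 3 * b * r + a * b = 0) :
    Nat.card f.Gal = 72 :=
  gal_order_seventytwo_of_12T38_general (by norm_num) a b f hf hirr hb_nsq hbd h3b hnc hnr
end

section
/- Let a, b ∈ ℚ and suppose f(x) = x^12 + a·x^6 + b is irreducible over ℚ. Assume: b is a square in ℚ; 3·(4b − a^2) is a square in ℚ; and either b is a cube in ℚ or the cubic x^3 − 3·b·x + a·b has a rational root. Then the Galois group of f over ℚ has order 12. -/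
open Polynomial

/-!
Let `x` be a root of `f` and `u = x ^ 6`, so that `u` and `b / u` are the two roots of the quadratic
`Y ^ 2 + a * Y + b` and `f = (X ^ 6 - u) * (X ^ 6 - b / u)`. Then `K(x)` contains a square root of
`-3`, namely `t / (2 * u + a)` where `t ^ 2 = 3 * (4 * b - a ^ 2)`, and hence the sixth roots of
unity. It also contains a cube root of `b`: a root of the cubic is of the form `c + b / c` with
`c ^ 3 = b * u`, which determines `c` in `K(u)`, and then `c / x ^ 2` is a cube root of `b`. Being
a square too, `b` is a sixth power `d ^ 6`, and the roots of `f` are the products of `x` and `d / x`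
with the sixth roots of unity. So `K(x)`, of degree 12, is the splitting field of `f`.
-/

lemma exists_pow_mul_eq_of_coprime {M : Type*} [CommGroupWithZero M] {m n : ℕ} {b s w : M}
    (hmn : m.Coprime n) (hs : s ^ m = b) (hw : w ^ n = b) : ∃ d, d ^ (m * n) = b := by
  obtain ⟨d, hsd, -⟩ := (pow_eq_pow_iff_of_coprime hmn).mp (hs.trans hw.symm)
  exact ⟨d, by rw [← hs, hsd, ← pow_mul, mul_comm]⟩

lemma root_pow_notMem_range_algebraMap {R : Type*} [CommRing R] [IsDomain R] {f : R[X]} {n : ℕ}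
    (hn : n ≠ 0) (hnf : n < f.natDegree) :
    AdjoinRoot.root f ^ n ∉ Set.range (algebraMap R (AdjoinRoot f)) := by
  rintro ⟨c, hc⟩
  have hdvd : f ∣ X ^ n - C c := by
    rw [← AdjoinRoot.mk_eq_zero, map_sub, map_pow, AdjoinRoot.mk_X, AdjoinRoot.mk_C,
      ← hc, AdjoinRoot.algebraMap_eq, sub_self]
  have hle := natDegree_le_of_dvd hdvd (X_pow_sub_C_ne_zero (Nat.pos_of_ne_zero hn) c)
  rw [natDegree_X_pow_sub_C] at hle
  exact hnf.not_ge hle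

section

variable {K : Type*} [Field K] {f : K[X]}

lemma separable_of_irreducible_of_natDegree_ne_zero_s16 (hirr : Irreducible f)
    (hdeg : (f.natDegree : K) ≠ 0) : f.Separable := by
  rw [separable_iff_derivative_ne_zero hirr]
  intro hderiv
  have hcoeff := coeff_derivative f (f.natDegree - 1)
  have hpos : f.natDegree - 1 + 1 = f.natDegree := Nat.sub_add_cancel hirr.natDegree_pos
  rw [hderiv, coeff_zero, ← Nat.cast_add_one, hpos, coeff_natDegree] at hcoeff
  exact mul_ne_zero (leadingCoeff_ne_zero.mpr hirr.ne_zero) hdeg hcoeff.symm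

lemma isSplittingField_adjoinRoot_of_splits [Fact (Irreducible f)]
    (hsplits : (f.map (algebraMap K (AdjoinRoot f))).Splits) :
    IsSplittingField K (AdjoinRoot f) f where
  splits' := hsplits
  adjoin_rootSet' := by
    rw [eq_top_iff, ← AdjoinRoot.adjoinRoot_eq_top]
    refine Algebra.adjoin_mono (Set.singleton_subset_iff.mpr ?_)
    rw [mem_rootSet, AdjoinRoot.aeval_eq, AdjoinRoot.mk_self]
    exact ⟨(Fact.out : Irreducible f).ne_zero, rfl⟩

lemma card_gal_eq_natDegree_of_splits_adjoinRoot [Fact (Irreducible f)] (hsep : f.Separable)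
    (hsplits : (f.map (algebraMap K (AdjoinRoot f))).Splits) :
    Nat.card f.Gal = f.natDegree := by
  have := isSplittingField_adjoinRoot_of_splits hsplits
  rw [Gal.card_of_separable hsep,
    ← (IsSplittingField.algEquiv (AdjoinRoot f) f).toLinearEquiv.finrank_eq]
  exact finrank_quotient_span_eq_natDegree

end

section

variable {L : Type*} [Field L]

lemma isPrimitiveRoot_six_of_sq_eq_neg_three_s16 (h2 : (2 : L) ≠ 0) (h3 : (3 : L) ≠ 0) {q : L}
    (hq : q ^ 2 = -3) : IsPrimitiveRoot ((1 + q) / 2) 6 := by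
  have : NeZero ((6 : ℕ) : L) := ⟨by
    rw [show ((6 : ℕ) : L) = 2 * 3 by norm_num]
    exact mul_ne_zero h2 h3⟩
  rw [← isRoot_cyclotomic_iff, cyclotomic_six, IsRoot.def]
  simp only [eval_add, eval_sub, eval_pow, eval_X, eval_one]
  field_simp
  linear_combination hq

lemma splits_X_pow_two_mul_add_C_mul_X_pow_add_C {n : ℕ} {ζ a b x d : L}
    (hζ : IsPrimitiveRoot ζ n) (hx0 : x ≠ 0) (hx : x ^ (2 * n) + a * x ^ n + b = 0)
    (hd : d ^ n = b) : (X ^ (2 * n) + C a * X ^ n + C b : L[X]).Splits := by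
  have hprod : x ^ n * (d / x) ^ n = b := by
    rw [← mul_pow, mul_div_cancel₀ _ hx0, hd]
  have hsum : x ^ n + (d / x) ^ n = -a := by
    refine mul_left_cancel₀ (pow_ne_zero n hx0) ?_
    linear_combination hx + hprod
  have hfactor : (X ^ (2 * n) + C a * X ^ n + C b : L[X]) =
      (X ^ n - C (x ^ n)) * (X ^ n - C ((d / x) ^ n)) := by
    rw [← hprod, ← neg_eq_iff_eq_neg.mpr hsum]
    simp only [C_neg, C_add, C_mul]
    ring
  rw [hfactor]
  exact (X_pow_sub_C_splits_of_isPrimitiveRoot hζ rfl).mul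
    (X_pow_sub_C_splits_of_isPrimitiveRoot hζ rfl)

lemma sq_div_two_mul_add_eq_neg_three {a b u t : L} (hu : u ^ 2 + a * u + b = 0)
    (hne : 2 * u + a ≠ 0) (ht : t ^ 2 = 3 * (4 * b - a ^ 2)) : (t / (2 * u + a)) ^ 2 = -3 := by
  rw [div_pow, div_eq_iff (pow_ne_zero 2 hne)]
  linear_combination ht + 12 * hu

/- The witness `c` satisfies `c + b / c = r`; eliminating `c ^ 3 = b * u` gives
`(r ^ 2 - b) * c = b * (u + r)`. -/
lemma exists_pow_three_eq_mul {a b u r : L} (hu : u ^ 2 + a * u + b = 0)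
    (hr : r ^ 3 - 3 * b * r + a * b = 0) : ∃ c, c ^ 3 = b * u := by
  have hcube : (b * (u + r)) ^ 3 = b * u * (r ^ 2 - b) ^ 3 := by
    linear_combination b * (b * u + r ^ 3) * (b * hu - u * hr)
  by_cases hrb : r ^ 2 - b = 0
  · have hprod : b * (u + r) = 0 := by
      rw [hrb, zero_pow three_ne_zero, mul_zero] at hcube
      exact eq_zero_of_pow_eq_zero hcube
    refine ⟨-r, ?_⟩
    linear_combination -r * hrb - hprod
  · refine ⟨b * (u + r) / (r ^ 2 - b), ?_⟩
    rw [div_pow, hcube, mul_div_cancel_right₀ _ (pow_ne_zero 3 hrb)]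

lemma exists_pow_three_eq_of_trinomial_root {a b y r : L} (hy0 : y ≠ 0)
    (hy : y ^ 6 + a * y ^ 3 + b = 0) (hr : r ^ 3 - 3 * b * r + a * b = 0) :
    ∃ w, w ^ 3 = b := by
  have hu : (y ^ 3) ^ 2 + a * y ^ 3 + b = 0 := by linear_combination hy
  obtain ⟨c, hc⟩ := exists_pow_three_eq_mul hu hr
  refine ⟨c / y, ?_⟩
  rw [div_pow, hc, mul_div_cancel_right₀ _ (pow_ne_zero 3 hy0)]

lemma splits_X_pow_twelve_add {a b x : L} (h2 : (2 : L) ≠ 0) (h3 : (3 : L) ≠ 0) (hx0 : x ≠ 0)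
    (hx : x ^ 12 + a * x ^ 6 + b = 0) (hne : 2 * x ^ 6 + a ≠ 0) (hb_sq : ∃ s, s ^ 2 = b)
    (hd : ∃ t, t ^ 2 = 3 * (4 * b - a ^ 2))
    (hcr : (∃ c, c ^ 3 = b) ∨ ∃ r, r ^ 3 - 3 * b * r + a * b = 0) :
    (X ^ 12 + C a * X ^ 6 + C b : L[X]).Splits := by
  obtain ⟨s, hs⟩ := hb_sq
  obtain ⟨t, ht⟩ := hd
  have hu : (x ^ 6) ^ 2 + a * x ^ 6 + b = 0 := by linear_combination hx
  have hx2 : (x ^ 2) ^ 6 + a * (x ^ 2) ^ 3 + b = 0 := by linear_combination hx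
  obtain ⟨w, hw⟩ : ∃ w, w ^ 3 = b :=
    hcr.elim id fun ⟨_, hr⟩ ↦
      exists_pow_three_eq_of_trinomial_root (pow_ne_zero 2 hx0) hx2 hr
  obtain ⟨d, hd6⟩ := exists_pow_mul_eq_of_coprime (by norm_num : Nat.Coprime 2 3) hs hw
  have hζ := isPrimitiveRoot_six_of_sq_eq_neg_three_s16 h2 h3
    (sq_div_two_mul_add_eq_neg_three hu hne ht)
  simpa only [Nat.reduceMul] using
    splits_X_pow_two_mul_add_C_mul_X_pow_add_C (n := 6) hζ hx0 hx hd6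

end

lemma splits_map_of_pow_six_notMem_range {K L : Type*} [Field K] [Field L] [Algebra K L]
    (h2 : (2 : K) ≠ 0) (h3 : (3 : K) ≠ 0) {a b : K} {x : L}
    (hx : aeval x (X ^ 12 + C a * X ^ 6 + C b) = 0) (hx6 : x ^ 6 ∉ Set.range (algebraMap K L))
    (hb_sq : ∃ s, s ^ 2 = b) (hd : ∃ t, t ^ 2 = 3 * (4 * b - a ^ 2))
    (hcr : (∃ c, c ^ 3 = b) ∨ ∃ r, r ^ 3 - 3 * b * r + a * b = 0) :
    ((X ^ 12 + C a * X ^ 6 + C b : K[X]).map (algebraMap K L)).Splits := by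
  set φ := algebraMap K L
  have hφ2 : (2 : L) ≠ 0 := by rwa [← map_ofNat φ 2, _root_.map_ne_zero]
  have hφ3 : (3 : L) ≠ 0 := by rwa [← map_ofNat φ 3, _root_.map_ne_zero]
  have hx0 : x ≠ 0 := by
    rintro rfl
    exact hx6 ⟨0, by simp⟩
  have hne : 2 * x ^ 6 + φ a ≠ 0 := by
    intro h
    refine hx6 ⟨-a / 2, ?_⟩
    rw [map_div₀, map_neg, map_ofNat, div_eq_iff hφ2]
    linear_combination -h
  have hroot : x ^ 12 + φ a * x ^ 6 + φ b = 0 := by simpa using hx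
  have hφb_sq : ∃ s, s ^ 2 = φ b := hb_sq.imp' φ fun s hs ↦ by rw [← hs, map_pow]
  have hφd : ∃ t, t ^ 2 = 3 * (4 * φ b - φ a ^ 2) :=
    hd.imp' φ fun t ht ↦ by simpa [map_ofNat φ] using congrArg φ ht
  have hφcr : (∃ c, c ^ 3 = φ b) ∨ ∃ r, r ^ 3 - 3 * φ b * r + φ a * φ b = 0 :=
    hcr.imp (fun h ↦ h.imp' φ fun c hc ↦ by rw [← hc, map_pow])
      (fun h ↦ h.imp' φ fun r hr ↦ by simpa [map_ofNat φ] using congrArg φ hr)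
  simpa using splits_X_pow_twelve_add hφ2 hφ3 hx0 hroot hne hφb_sq hφd hφcr

theorem gal_order_twelve_of_12T3_case2_general {K : Type*} [Field K] (h2 : (2 : K) ≠ 0)
    (h3 : (3 : K) ≠ 0) (a b : K) (f : K[X])
    (hf : f = X ^ 12 + C a * X ^ 6 + C b) (hirr : Irreducible f)
    (hb_sq : ∃ s : K, s ^ 2 = b)
    (hd : ∃ s : K, s ^ 2 = 3 * (4 * b - a ^ 2))
    (hcr : (∃ c : K, c ^ 3 = b) ∨ ∃ r : K, r ^ 3 - 3 * b * r + a * b = 0) :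
    Nat.card f.Gal = 12 := by
  have : Fact (Irreducible f) := ⟨hirr⟩
  have hdeg : f.natDegree = 12 := by rw [hf]; compute_degree!
  have hsep : f.Separable := by
    apply separable_of_irreducible_of_natDegree_ne_zero_s16 hirr
    rw [hdeg, show ((12 : ℕ) : K) = 2 ^ 2 * 3 by norm_num]
    exact mul_ne_zero (pow_ne_zero 2 h2) h3
  have hroot : aeval (AdjoinRoot.root f) f = 0 := by rw [AdjoinRoot.aeval_eq, AdjoinRoot.mk_self]
  have hroot6 : AdjoinRoot.root f ^ 6 ∉ Set.range (algebraMap K (AdjoinRoot f)) :=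
    root_pow_notMem_range_algebraMap (by norm_num) (by rw [hdeg]; norm_num)
  have hsplits : (f.map (algebraMap K (AdjoinRoot f))).Splits := by
    subst hf
    exact splits_map_of_pow_six_notMem_range h2 h3 hroot hroot6 hb_sq hd hcr
  rw [card_gal_eq_natDegree_of_splits_adjoinRoot hsep hsplits, hdeg]

theorem gal_order_twelve_of_12T3_case2 (a b : ℚ) (f : ℚ[X])
    (hf : f = X ^ 12 + C a * X ^ 6 + C b) (hirr : Irreducible f)
    (hb_sq : ∃ s : ℚ, s ^ 2 = b)
    (hd : ∃ s : ℚ, s ^ 2 = 3 * (4 * b - a ^ 2))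
    (hcr : (∃ c : ℚ, c ^ 3 = b) ∨ ∃ r : ℚ, r ^ 3 - 3 * b * r + a * b = 0) :
    Nat.card f.Gal = 12 :=
  gal_order_twelve_of_12T3_case2_general two_ne_zero three_ne_zero a b f hf hirr hb_sq hd hcr
end
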